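/- arXiv:1712.07445 — 5 statements merged into one kernel-verified Lean document; each statement's English description precedes it below -/
import Mathlib

section
/- Let S be a finite index set with |S| = k ≥ 1, let Dom_i (i ∈ S) be finite domains, and let R ⊆ Π_{i∈S} Dom_i be a finite relation. Let ℓ = max over i ∈ S and v ∈ Dom_i of the number of tuples x ∈ R with x_i = v (the maximum degree of R), and let deg(R) denote the least integer d such that R can be written as a disjoint union of d matchings. Then ℓ ≤ deg(R) ≤ k(ℓ−1)+1; in particular, R can be partitioned into k(ℓ−1)+1 pairwise disjoint (possibly empty) matchings M_1, …, M_{k(ℓ−1)+1} with R = ⋃_j M_j. -/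
/-- A relation `M ⊆ Π_{i∈S} Dom i` is a matching if any two of its tuples are
either equal or differ in every coordinate. -/
def IsMatching {S : Type*} {Dom : S → Type*} (M : Finset ((i : S) → Dom i)) : Prop :=
  ∀ x ∈ M, ∀ y ∈ M, x = y ∨ ∀ i : S, x i ≠ y i

theorem exists_greedy_coloring
    {S : Type*} [Fintype S] [DecidableEq S] {Dom : S → Type*}
    [∀ i, DecidableEq (Dom i)]
    (R : Finset ((i : S) → Dom i)) (ℓ : ℕ)
    (hub : ∀ (i : S) (v : Dom i), (R.filter (fun x => x i = v)).card ≤ ℓ)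
    (T : Finset ((i : S) → Dom i)) (hT : T ⊆ R) :
    ∃ c : ((i : S) → Dom i) → Fin (Fintype.card S * (ℓ - 1) + 1),
      ∀ x ∈ T, ∀ y ∈ T, c x = c y → x = y ∨ ∀ i, x i ≠ y i := by
  induction T using Finset.induction_on with
  | empty => exact ⟨fun _ => 0, by simp⟩
  | insert a T ha ih =>
    obtain ⟨c, hc⟩ := ih (fun x hx => hT (Finset.mem_insert_of_mem hx))
    let B : Finset ((i : S) → Dom i) :=
      Finset.univ.biUnion (fun i : S => T.filter (fun x => x i = a i))
    have hB : B.card ≤ Fintype.card S * (ℓ - 1) := by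
      refine Finset.card_biUnion_le_card_mul _ _ _ ?_
      intro i _
      have h1 : insert a (T.filter (fun x => x i = a i)) ⊆ R.filter (fun x => x i = a i) := by
        intro x hx
        rcases Finset.mem_insert.1 hx with rfl | hx
        · exact Finset.mem_filter.2 ⟨hT (Finset.mem_insert_self _ _), rfl⟩
        · have := Finset.mem_filter.1 hx
          exact Finset.mem_filter.2 ⟨hT (Finset.mem_insert_of_mem this.1), this.2⟩
      have h2 := (Finset.card_le_card h1).trans (hub i (a i))
      rw [Finset.card_insert_of_notMem (fun h => ha (Finset.mem_filter.1 h).1)] at h2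
      omega
    obtain ⟨q, hq⟩ : ∃ q, q ∉ B.image c := by
      by_contra! h
      have h3 : (Finset.univ : Finset (Fin (Fintype.card S * (ℓ - 1) + 1))).card
          ≤ (B.image c).card := Finset.card_le_card (fun q _ => h q)
      have h4 := Finset.card_image_le (s := B) (f := c)
      rw [Finset.card_univ, Fintype.card_fin] at h3
      omega
    have key : ∀ x ∈ T, c x = q → ∀ i, x i ≠ a i := by
      intro x hx hxq i hi
      exact hq (Finset.mem_image.2 ⟨x, Finset.mem_biUnion.2
        ⟨i, Finset.mem_univ _, Finset.mem_filter.2 ⟨hx, hi⟩⟩, hxq⟩)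
    refine ⟨Function.update c a q, ?_⟩
    have hne : ∀ x ∈ T, x ≠ a := fun x hx h => ha (h ▸ hx)
    intro x hx y hy hxy
    rcases Finset.mem_insert.1 hx with rfl | hx2 <;> rcases Finset.mem_insert.1 hy with rfl | hy2
    · exact Or.inl rfl
    · rw [Function.update_self, Function.update_of_ne (hne y hy2)] at hxy
      exact Or.inr fun i => (key y hy2 hxy.symm i).symm
    · rw [Function.update_self, Function.update_of_ne (hne x hx2)] at hxy
      exact Or.inr (key x hx2 hxy)
    · rw [Function.update_of_ne (hne x hx2), Function.update_of_ne (hne y hy2)] at hxy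
      exact hc x hx2 y hy2 hxy

/-- Let `|S| = k ≥ 1`, `R ⊆ Π_{i∈S} Dom i`, and let `ℓ` be the maximum degree of `R`
(the maximum, over coordinates `i` and values `v`, of the number of tuples `x ∈ R`
with `x i = v`).  Then `R` can be partitioned into `k(ℓ−1)+1` pairwise disjoint
(possibly empty) matchings, and moreover every partition of `R` into `d` pairwise
disjoint matchings has `d ≥ ℓ`; that is, `ℓ ≤ deg(R) ≤ k(ℓ−1)+1`. -/
theorem max_degree_le_matching_degree_le
    {S : Type*} [Fintype S] [DecidableEq S] {Dom : S → Type*}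
    [∀ i, Fintype (Dom i)] [∀ i, DecidableEq (Dom i)]
    (k : ℕ) (hk : Fintype.card S = k) (hk1 : 1 ≤ k)
    (R : Finset ((i : S) → Dom i)) (ℓ : ℕ)
    (hub : ∀ (i : S) (v : Dom i), (R.filter (fun x => x i = v)).card ≤ ℓ)
    (hattain : ∃ (i : S) (v : Dom i), (R.filter (fun x => x i = v)).card = ℓ) :
    (∃ M : Fin (k * (ℓ - 1) + 1) → Finset ((i : S) → Dom i),
        (∀ j, IsMatching (M j)) ∧
        (∀ j j', j ≠ j' → Disjoint (M j) (M j')) ∧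
        R = Finset.univ.biUnion M) ∧
    (∀ (d : ℕ) (M : Fin d → Finset ((i : S) → Dom i)),
        (∀ j, IsMatching (M j)) →
        (∀ j j', j ≠ j' → Disjoint (M j) (M j')) →
        R = Finset.univ.biUnion M → ℓ ≤ d) := by
  subst hk
  constructor
  · obtain ⟨c, hc⟩ := exists_greedy_coloring R ℓ hub R (Finset.Subset.refl R)
    refine ⟨fun j => R.filter (fun x => c x = j), ?_, ?_, ?_⟩
    · intro j x hx y hy
      have hx := Finset.mem_filter.1 hx
      have hy := Finset.mem_filter.1 hy
      exact hc x hx.1 y hy.1 (hx.2.trans hy.2.symm)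
    · intro j j' hj
      rw [Finset.disjoint_left]
      intro x hx hy
      exact hj ((Finset.mem_filter.1 hx).2.symm.trans (Finset.mem_filter.1 hy).2)
    · ext x
      simp
  · intro d M hM _ hR
    obtain ⟨i, v, hv⟩ := hattain
    have h1 : R.filter (fun x => x i = v) ⊆
        Finset.univ.biUnion (fun j => (M j).filter (fun x => x i = v)) := by
      intro x hx
      have hx := Finset.mem_filter.1 hx
      rw [hR] at hx
      obtain ⟨j, hj, hxj⟩ := Finset.mem_biUnion.1 hx.1
      exact Finset.mem_biUnion.2 ⟨j, hj, Finset.mem_filter.2 ⟨hxj, hx.2⟩⟩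
    have h2 : (Finset.univ.biUnion (fun j => (M j).filter (fun x => x i = v))).card
        ≤ (Finset.univ : Finset (Fin d)).card * 1 := by
      refine Finset.card_biUnion_le_card_mul _ _ _ ?_
      intro j _
      rw [Finset.card_le_one]
      intro x hx y hy
      have hx := Finset.mem_filter.1 hx
      have hy := Finset.mem_filter.1 hy
      rcases hM j x hx.1 y hy.1 with h | h
      · exact h
      · exact absurd (hx.2.trans hy.2.symm) (h i)
    have h3 := (Finset.card_le_card h1).trans h2
    rw [hv, Finset.card_univ, Fintype.card_fin] at h3
    omega
end

section
/- Let Σ be a finite alphabet, let k ≥ 2 and n ≥ 1 be integers, and let w_1, …, w_m ∈ Σ^n (m ≤ k) be pairwise distinct words such that the Hamming distance between any two of them is at least (1 − 2/k²)·n. Then there exists a position i ∈ [n] at which the symbols w_1(i), …, w_m(i) are pairwise distinct. -/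
/-- If `m ≤ k` pairwise distinct words of length `n` over a finite alphabet have
pairwise Hamming distance at least `(1 − 2/k²)·n`, then there is a position at which
all of them carry pairwise distinct symbols. -/
theorem exists_position_pairwise_distinct
    {σ : Type*} [Fintype σ] [DecidableEq σ]
    (k n m : ℕ) (hk : 2 ≤ k) (hn : 1 ≤ n) (hm : m ≤ k)
    (w : Fin m → (Fin n → σ))
    (hdistinct : Function.Injective w)
    (hdist : ∀ a b : Fin m, a ≠ b →
      ((1 : ℝ) - 2 / (k : ℝ) ^ 2) * (n : ℝ) ≤ (hammingDist (w a) (w b) : ℝ)) :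
    ∃ i : Fin n, ∀ a b : Fin m, a ≠ b → w a i ≠ w b i := by
  by_contra! hcon
  -- double count triples (i, a, b) with a ≠ b and w a i = w b i
  have hswap := Finset.sum_card_bipartiteAbove_eq_sum_card_bipartiteBelow
    (s := (Finset.univ : Finset (Fin n))) (t := (Finset.univ : Finset (Fin m)).offDiag)
    (fun i p => w p.1 i = w p.2 i)
  have hlow : n * 2 ≤ ∑ i : Fin n, (Finset.bipartiteAbove
      (fun (i : Fin n) (p : Fin m × Fin m) => w p.1 i = w p.2 i)
      (Finset.univ : Finset (Fin m)).offDiag i).card := by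
    have := Finset.card_nsmul_le_sum (Finset.univ : Finset (Fin n))
      (fun i => (Finset.bipartiteAbove
        (fun (i : Fin n) (p : Fin m × Fin m) => w p.1 i = w p.2 i)
        (Finset.univ : Finset (Fin m)).offDiag i).card) 2 ?_
    · simpa using this
    · intro i _
      obtain ⟨a, b, hab, h⟩ := hcon i
      have hne : (a, b) ≠ (b, a) := by
        intro h'
        exact hab (Prod.ext_iff.1 h').1
      rw [← Finset.card_pair hne]
      apply Finset.card_le_card
      intro p hp
      simp only [Finset.mem_insert, Finset.mem_singleton] at hp
      rcases hp with rfl | rfl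
      · simp [Finset.mem_bipartiteAbove, hab, h]
      · simp [Finset.mem_bipartiteAbove, hab.symm, h]
  have hk0 : (0 : ℝ) < (k : ℝ) ^ 2 := by positivity
  have hn0 : (0 : ℝ) < (n : ℝ) := by exact_mod_cast hn
  have hup : ∀ p ∈ (Finset.univ : Finset (Fin m)).offDiag,
      ((Finset.bipartiteBelow (fun (i : Fin n) (p : Fin m × Fin m) => w p.1 i = w p.2 i)
        Finset.univ p).card : ℝ) ≤ 2 / (k : ℝ) ^ 2 * n := by
    intro p hp
    have hne : p.1 ≠ p.2 := (Finset.mem_offDiag.1 hp).2.2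
    have h1 := hdist p.1 p.2 hne
    have h2 := Finset.card_filter_add_card_filter_not
      (s := (Finset.univ : Finset (Fin n))) (fun i => w p.1 i = w p.2 i)
    have h3 : ((Finset.bipartiteBelow (fun (i : Fin n) (p : Fin m × Fin m) => w p.1 i = w p.2 i)
        Finset.univ p).card : ℝ) + (hammingDist (w p.1) (w p.2) : ℝ) = n := by
      rw [Finset.card_univ, Fintype.card_fin] at h2
      exact_mod_cast h2
    linarith
  have hsum := Finset.sum_le_card_nsmul _ _ _ hup
  rw [← Nat.cast_sum, ← hswap, Finset.offDiag_card, nsmul_eq_mul] at hsum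
  simp only [Finset.card_univ, Fintype.card_fin] at hsum
  have hlow' : (n : ℝ) * 2 ≤ ((∑ i : Fin n, (Finset.bipartiteAbove
      (fun (i : Fin n) (p : Fin m × Fin m) => w p.1 i = w p.2 i)
      (Finset.univ : Finset (Fin m)).offDiag i).card : ℕ) : ℝ) := by exact_mod_cast hlow
  have hfin := hlow'.trans hsum
  have hlt : ((m * m - m : ℕ) : ℝ) < (k : ℝ) ^ 2 := by
    have : m * m - m < k ^ 2 := by
      have h1 : m * m ≤ k * k := Nat.mul_le_mul hm hm
      have h2 : 0 < k * k := by positivity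
      rw [pow_two]
      rcases Nat.eq_zero_or_pos m with h | h
      · subst h; simpa using h2
      · have h3 : 0 < m * m := by positivity
        omega
    exact_mod_cast this
  have : ((m * m - m : ℕ) : ℝ) * (2 / (k : ℝ) ^ 2 * n) < (k : ℝ) ^ 2 * (2 / (k : ℝ) ^ 2 * n) :=
    mul_lt_mul_of_pos_right hlt (by positivity)
  have h5 : (k : ℝ) ^ 2 * (2 / (k : ℝ) ^ 2 * n) = n * 2 := by
    field_simp
  linarith
end

section
/- Let G = (U, A) be a multi-hypergraph with |U| = k, let N, q, c, n be positive integers, and let w_1, …, w_N ∈ [q]^n be words such that for every set of at most k of them there exists a position i ∈ [n] at which they are pairwise distinct. Suppose F̄ is a family of functions f̄ : [q] → [c] satisfying the coloring condition for G with domain size q. Define F = { j ↦ f̄(w_j(i)) : i ∈ [n], f̄ ∈ F̄ }, a family of functions [N] → [c] of size at most n·|F̄|. Then F satisfies the coloring condition for G with domain size N. -/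
/-- A proper coloring of the multi-hypergraph `(U, A)`: every edge `S ∈ A` contains
two distinct vertices receiving different colors. -/
def ProperColoring {U κ : Type*} (A : Multiset (Finset U)) (h : U → κ) : Prop :=
  ∀ S ∈ A, ∃ u ∈ S, ∃ v ∈ S, u ≠ v ∧ h u ≠ h v

/-- Code concatenation: if the words `w_1, …, w_N ∈ [q]^n` are such that any ≤ `k`
of them are pairwise distinguished at some position, and `F̄` is a family of
functions `[q] → [c]` satisfying the coloring condition for `(U, A)` (`|U| = k`)
with domain size `q`, then the family
`F = { j ↦ f̄ (w j i) : i ∈ [n], f̄ ∈ F̄ }`, of size at most `n·|F̄|`,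
satisfies the coloring condition for `(U, A)` with domain size `N`. -/
theorem code_concatenation_coloring_condition
    {U : Type*} [Fintype U] (A : Multiset (Finset U)) (hA : ∀ S ∈ A, 2 ≤ S.card)
    (k : ℕ) (hk : Fintype.card U = k)
    (N q c n : ℕ) (hN : 0 < N) (hq : 0 < q) (hc : 0 < c) (hn : 0 < n)
    (w : Fin N → Fin n → Fin q)
    (hw : ∀ T : Finset (Fin N), T.card ≤ k →
      ∃ i : Fin n, Set.InjOn (fun j => w j i) (T : Set (Fin N)))
    (Fbar : Finset (Fin q → Fin c))
    (hFbar : ∀ h : U → Fin q, ProperColoring A h →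
      ∃ f ∈ Fbar, ProperColoring A (f ∘ h)) :
    ((Finset.univ ×ˢ Fbar).image
        (fun x : Fin n × (Fin q → Fin c) => fun j : Fin N => x.2 (w j x.1))).card ≤
      n * Fbar.card ∧
    ∀ h : U → Fin N, ProperColoring A h →
      ∃ f ∈ (Finset.univ ×ˢ Fbar).image
          (fun x : Fin n × (Fin q → Fin c) => fun j : Fin N => x.2 (w j x.1)),
        ProperColoring A (f ∘ h) := by
  refine ⟨?_, ?_⟩
  · refine Finset.card_image_le.trans ?_
    simp [Finset.card_product]
  · intro h hh
    obtain ⟨i, hi⟩ := hw (Finset.univ.image h)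
      (Finset.card_image_le.trans (by rw [Finset.card_univ, hk]))
    obtain ⟨f, hf, hfp⟩ := hFbar (fun u => w (h u) i) (by
      intro S hS
      obtain ⟨u, hu, v, hv, huv, hne⟩ := hh S hS
      exact ⟨u, hu, v, hv, huv, fun he => hne (hi (by simp) (by simp) he)⟩)
    exact ⟨fun j => f (w j i), Finset.mem_image.2 ⟨(i, f), by simp [hf], rfl⟩, hfp⟩
end

section
/- Let G = (U, A) be a multi-hypergraph, let N, c be positive integers, let p = (p_1,…,p_c) be a probability vector with θ(p) > 0, and let D^P be the product distribution on functions [N] → [c] in which each value f(x) independently equals i with probability p_i. Suppose S is a finite nonempty multiset of functions [N] → [c] that is a (|U|, δ)-approximation of D^P with δ = θ(p)/(2·c^{|U|}). Then for every proper N-coloring h of G, the fraction of functions f ∈ S for which f ∘ h is a proper c-coloring of G is at least θ(p)/2. -/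
open Classical

/-- For an `N`-coloring `h` of the multi-hypergraph `(U, A)`, the sum over all proper
`c`-colorings `g` of the homomorphic image `h(G)` (a map on the image `h(U) ⊆ [N]`
giving two differently-colored distinct vertices in every image edge `h(S)`)
of `∏_{v ∈ h(U)} p_{g v}`. -/
noncomputable def imageColoringSum {U : Type*} [Fintype U] (A : Multiset (Finset U))
    {N c : ℕ} (p : Fin c → ℝ) (h : U → Fin N) : ℝ :=
  ∑ g : {v : Fin N // v ∈ Finset.image h Finset.univ} → Fin c,
    if ∀ S ∈ A, ∃ u ∈ S, ∃ v ∈ S,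
        g ⟨h u, Finset.mem_image_of_mem h (Finset.mem_univ u)⟩ ≠
        g ⟨h v, Finset.mem_image_of_mem h (Finset.mem_univ v)⟩
    then ∏ v : {v : Fin N // v ∈ Finset.image h Finset.univ}, p (g v)
    else 0

/-- `θ(p)`: the minimum, over proper `N`-colorings `h` of `(U, A)`, of the sum over
proper `c`-colorings `g` of the homomorphic image `h(G)` of `∏_{v ∈ h(U)} p_{g v}`. -/
noncomputable def theta {U : Type*} [Fintype U] (A : Multiset (Finset U))
    (N : ℕ) {c : ℕ} (p : Fin c → ℝ) : ℝ :=
  sInf {t : ℝ | ∃ h : U → Fin N, ProperColoring A h ∧ imageColoringSum A p h = t}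

/-- `P(G, c)`: the number of proper `c`-colorings of the multi-hypergraph `(U, A)`. -/
noncomputable def numProperColorings (U : Type*) [Fintype U] (A : Multiset (Finset U))
    (c : ℕ) : ℕ :=
  Fintype.card {h : U → Fin c // ProperColoring A h}

theorem countP_fiber_sum {α β : Type*} [Fintype β] (r : α → β) (Q : β → Prop) (S : Multiset α) :
    (S.countP (fun f => Q (r f)) : ℝ) =
      ∑ g : β, if Q g then (S.countP (fun f => r f = g) : ℝ) else 0 := by
  induction S using Multiset.induction_on with
  | empty => simp
  | cons a S ih =>
    simp only [Multiset.countP_cons, Nat.cast_add, ih]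
    have : ∀ g : β, (if Q g then ((S.countP (fun f => r f = g) : ℝ) +
        ((if r a = g then 1 else 0 : ℕ) : ℝ)) else 0) =
        (if Q g then (S.countP (fun f => r f = g) : ℝ) else 0) +
          (if r a = g then (if Q g then 1 else 0) else 0) := by
      intro g
      split_ifs <;> simp
    rw [Finset.sum_congr rfl (fun g _ => this g), Finset.sum_add_distrib,
      Finset.sum_ite_eq]
    simp

theorem imageColoringSum_nonneg' {U : Type*} [Fintype U] (A : Multiset (Finset U))
    {N c : ℕ} (p : Fin c → ℝ) (hp0 : ∀ i, 0 ≤ p i) (h : U → Fin N) :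
    0 ≤ imageColoringSum A p h := by
  unfold imageColoringSum
  refine Finset.sum_nonneg fun g _ => ?_
  split_ifs
  · exact Finset.prod_nonneg fun v _ => hp0 _
  · exact le_rfl

/-- Derandomization via approximate distributions: if the multiset `S` of functions
`[N] → [c]` is a `(|U|, δ)`-approximation of the product distribution `D^P` given by
the probability vector `p` (each coordinate independently equal to `i` with
probability `p i`), where `δ = θ(p)/(2·c^{|U|})`, then for every proper `N`-coloring
`h` of `(U, A)`, the fraction of `f ∈ S` for which `f ∘ h` is a proper `c`-coloring
of `(U, A)` is at least `θ(p)/2`. -/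
theorem approx_distribution_coloring_fraction
    {U : Type*} [Fintype U] (A : Multiset (Finset U)) (hA : ∀ S ∈ A, 2 ≤ S.card)
    (N c : ℕ) (hN : 0 < N) (hc : 0 < c)
    (p : Fin c → ℝ) (hp0 : ∀ i, 0 ≤ p i) (hp1 : ∑ i, p i = 1)
    (hθ : 0 < theta A N p)
    (S : Multiset (Fin N → Fin c)) (hS : S ≠ 0)
    (happrox : ∀ I : Finset (Fin N), I.card ≤ Fintype.card U →
      ∀ v : Fin N → Fin c,
        |((S.countP (fun f => ∀ x ∈ I, f x = v x) : ℝ) / (Multiset.card S : ℝ)) -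
            ∏ x ∈ I, p (v x)| <
          theta A N p / (2 * (c : ℝ) ^ Fintype.card U)) :
    ∀ h : U → Fin N, ProperColoring A h →
      theta A N p / 2 ≤
        (S.countP (fun f => ProperColoring A (f ∘ h)) : ℝ) / (Multiset.card S : ℝ) := by
  intro h hh
  have hθle : theta A N p ≤ imageColoringSum A p h := by
    refine csInf_le ⟨0, ?_⟩ ⟨h, hh, rfl⟩
    rintro t ⟨h', -, rfl⟩
    exact imageColoringSum_nonneg' A p hp0 h'
  set I : Finset (Fin N) := Finset.image h Finset.univ with hI
  have hIc : I.card ≤ Fintype.card U := Finset.card_image_le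
  set δ := theta A N p / (2 * (c : ℝ) ^ Fintype.card U) with hδ
  have hc1 : (1 : ℝ) ≤ c := by exact_mod_cast hc
  have hδ0 : 0 < δ := by positivity
  let r : (Fin N → Fin c) → ({v : Fin N // v ∈ I} → Fin c) := fun f x => f x
  let Q : ({v : Fin N // v ∈ I} → Fin c) → Prop := fun g =>
    ∀ S ∈ A, ∃ u ∈ S, ∃ v ∈ S,
        g ⟨h u, Finset.mem_image_of_mem h (Finset.mem_univ u)⟩ ≠
        g ⟨h v, Finset.mem_image_of_mem h (Finset.mem_univ v)⟩
  have hQ : (fun f : Fin N → Fin c => ProperColoring A (f ∘ h)) = fun f => Q (r f) := by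
    funext f
    apply propext
    constructor
    · intro H T hT
      obtain ⟨u, hu, v, hv, -, hne⟩ := H T hT
      exact ⟨u, hu, v, hv, hne⟩
    · intro H T hT
      obtain ⟨u, hu, v, hv, hne⟩ := H T hT
      exact ⟨u, hu, v, hv, fun e => hne (by subst e; rfl), hne⟩
  have key : ∀ g : {v : Fin N // v ∈ I} → Fin c,
      ∏ v, p (g v) - δ ≤ (S.countP (fun f => r f = g) : ℝ) / (Multiset.card S : ℝ) := by
    intro g
    let v : Fin N → Fin c := fun x => if hx : x ∈ I then g ⟨x, hx⟩ else ⟨0, hc⟩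
    have h1 := happrox I hIc v
    have h2 : ∏ x ∈ I, p (v x) = ∏ x, p (g x) := by
      rw [← Finset.prod_coe_sort]
      refine Finset.prod_congr rfl fun x _ => ?_
      simp [v]
    have h3 : (fun f : Fin N → Fin c => ∀ x ∈ I, f x = v x) = fun f => r f = g := by
      funext f
      apply propext
      constructor
      · intro H
        funext x
        have := H x x.2
        simpa [v, r] using this
      · rintro rfl x hx
        simp [v, r, hx]
    have h4 : S.countP (fun f : Fin N → Fin c => ∀ x ∈ I, f x = v x) =
        S.countP (fun f => r f = g) := by
      congr 1
    rw [h2] at h1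
    have h5 := (abs_lt.mp h1).1
    rw [← h4]
    have h6 : ∏ x, p (g x) - δ ≤ (S.countP (fun f => ∀ x ∈ I, f x = v x) : ℝ) /
        (Multiset.card S : ℝ) := by linarith
    convert h6
  have hcount : (S.countP (fun f => ProperColoring A (f ∘ h)) : ℝ) =
      ∑ g, if Q g then (S.countP (fun f => r f = g) : ℝ) else 0 := by
    have h7 := countP_fiber_sum r Q S
    have h8 : S.countP (fun f => ProperColoring A (f ∘ h)) = S.countP (fun f => Q (r f)) := by
      congr 1
    rw [h8]
    convert h7
  rw [hcount, Finset.sum_div]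
  have hsum : imageColoringSum A p h - (c : ℝ) ^ I.card * δ ≤
      ∑ g, (if Q g then (S.countP (fun f => r f = g) : ℝ) else 0) / (Multiset.card S : ℝ) := by
    have e : (c : ℝ) ^ I.card * δ = ∑ g : {v : Fin N // v ∈ I} → Fin c, δ := by
      simp
    rw [e, imageColoringSum, ← Finset.sum_sub_distrib]
    refine Finset.sum_le_sum fun g _ => ?_
    by_cases hq : Q g
    · have hq' := hq
      simp only [Q] at hq'
      rw [if_pos hq, if_pos hq']
      exact key g
    · have hq' := hq
      simp only [Q] at hq'
      rw [if_neg hq, if_neg hq']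
      simp [hδ0.le]
  have hpow : (c : ℝ) ^ I.card * δ ≤ (c : ℝ) ^ Fintype.card U * δ :=
    mul_le_mul_of_nonneg_right (pow_le_pow_right₀ hc1 hIc) hδ0.le
  have hfin : (c : ℝ) ^ Fintype.card U * δ = theta A N p / 2 := by
    rw [hδ]
    have : (c : ℝ) ^ Fintype.card U ≠ 0 := by positivity
    field_simp
  linarith
end

section
/- Let H = (V, E) be a hypergraph with V = [n], let F ⊆ V, and suppose some vertex of V belongs to at least one hyperedge of E. Let n' > n and let H' = ([n'], E') where E' = E ∪ { S_j : j ∈ [n']∖[n] } and each S_j = {i_j, j} for some i_j ∈ [n]. Then fhtw_F(H') ≤ fhtw_F(H) and subw_F(H') ≤ subw_F(H), where fhtw_F(H) = min over F-connex tree decompositions (T, χ) of H of (sup over edge-dominated polymatroids h on the vertex set of max over nodes t of h(χ(t))), and subw_F(H) = sup over edge-dominated polymatroids h of (min over F-connex tree decompositions (T, χ) of max over nodes t of h(χ(t))). -/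
open scoped ENNReal

/-- A tree decomposition of the hypergraph with edge set `E` on vertex set `V`:
a finite tree `T` together with a bag `χ(t) ⊆ V` for every node `t`, such that every
hyperedge is contained in some bag and, for every vertex `v`, the nodes whose bags
contain `v` induce a nonempty connected subtree. -/
structure TreeDecomp {V : Type*} (E : Finset (Finset V)) where
  ι : Type
  fin : Fintype ι
  T : SimpleGraph ι
  isTree : T.IsTree
  bag : ι → Finset V
  covers : ∀ S ∈ E, ∃ t : ι, S ⊆ bag t
  rip : ∀ v : V, (T.induce {t : ι | v ∈ bag t}).Connected

/-- A tree decomposition is `F`-connex if some set of nodes inducing a (nonempty)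
connected subtree has bags whose union is exactly `F`. -/
def TreeDecomp.FConnex {V : Type*} {E : Finset (Finset V)} (D : TreeDecomp E)
    (F : Finset V) : Prop :=
  ∃ V' : Set D.ι, (D.T.induce V').Connected ∧
    ∀ v : V, (v ∈ F ↔ ∃ t ∈ V', v ∈ D.bag t)

/-- A polymatroid: a nonnegative set function vanishing on `∅` that is monotone and
submodular. -/
def IsPolymatroid {V : Type*} [DecidableEq V] (h : Finset V → NNReal) : Prop :=
  h ∅ = 0 ∧ (∀ X Y : Finset V, X ⊆ Y → h X ≤ h Y) ∧
    ∀ X Y : Finset V, h (X ∪ Y) + h (X ∩ Y) ≤ h X + h Y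

/-- Edge-dominated: `h S ≤ 1` for every hyperedge `S ∈ E`. -/
def EdgeDominated {V : Type*} (E : Finset (Finset V)) (h : Finset V → NNReal) : Prop :=
  ∀ S ∈ E, h S ≤ 1

/-- The width of a tree decomposition with respect to a set function `h`:
the maximum of `h` over the bags. -/
noncomputable def TreeDecomp.width {V : Type*} {E : Finset (Finset V)}
    (D : TreeDecomp E) (h : Finset V → NNReal) : ℝ≥0∞ :=
  ⨆ t : D.ι, (h (D.bag t) : ℝ≥0∞)

/-- The submodular width `subw_F`: the sup over edge-dominated polymatroids of the
inf over `F`-connex tree decompositions of the max of `h` over the bags. -/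
noncomputable def subwF {V : Type*} [DecidableEq V] (E : Finset (Finset V))
    (F : Finset V) : ℝ≥0∞ :=
  ⨆ h : {h : Finset V → NNReal // IsPolymatroid h ∧ EdgeDominated E h},
    ⨅ D : {D : TreeDecomp E // D.FConnex F}, D.1.width h.1

/-- The fractional hypertree width `fhtw_F`: the inf over `F`-connex tree
decompositions of the sup over edge-dominated polymatroids of the max of `h` over
the bags. -/
noncomputable def fhtwF {V : Type*} [DecidableEq V] (E : Finset (Finset V))
    (F : Finset V) : ℝ≥0∞ :=
  ⨅ D : {D : TreeDecomp E // D.FConnex F},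
    ⨆ h : {h : Finset V → NNReal // IsPolymatroid h ∧ EdgeDominated E h},
      D.1.width h.1

namespace LeafExt

/-- The tree `T` with a leaf `inr j` attached at `t j` for every `j`. -/
def leafGraph {ι J : Type} (T : SimpleGraph ι) (t : J → ι) : SimpleGraph (ι ⊕ J) where
  Adj x y := match x, y with
    | .inl a, .inl b => T.Adj a b
    | .inl a, .inr j => a = t j
    | .inr j, .inl a => a = t j
    | .inr _, .inr _ => False
  symm := ⟨by
    rintro (a | i) (b | j) h
    · exact SimpleGraph.Adj.symm h
    · exact h
    · exact h
    · exact h⟩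
  loopless := ⟨by
    rintro (a | i) h
    · exact T.loopless.irrefl a h
    · exact h⟩

lemma leaf_conn {ι J : Type} (T : SimpleGraph ι) (t : J → ι) (A : Set (ι ⊕ J))
    (hA : (T.induce {a | Sum.inl a ∈ A}).Connected)
    (h : ∀ j, Sum.inr j ∈ A → Sum.inl (t j) ∈ A) :
    ((leafGraph T t).induce A).Connected := by
  obtain ⟨⟨a0, ha0⟩⟩ := hA.nonempty
  let f : (T.induce {a | Sum.inl a ∈ A}) →g ((leafGraph T t).induce A) :=
    { toFun := fun a => ⟨Sum.inl a.1, a.2⟩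
      map_rel' := fun {a b} hab => hab }
  have key : ∀ x : A, ((leafGraph T t).induce A).Reachable ⟨Sum.inl a0, ha0⟩ x := by
    have h1 : ∀ a (ha : Sum.inl a ∈ A),
        ((leafGraph T t).induce A).Reachable ⟨Sum.inl a0, ha0⟩ ⟨Sum.inl a, ha⟩ := fun a ha =>
      (hA.preconnected ⟨a0, ha0⟩ ⟨a, ha⟩).map f
    rintro ⟨a | j, hx⟩
    · exact h1 a hx
    · refine (h1 (t j) (h j hx)).trans (SimpleGraph.Adj.reachable ?_)
      show t j = t j
      rfl
  have : Nonempty A := ⟨⟨Sum.inl a0, ha0⟩⟩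
  exact SimpleGraph.Connected.mk fun x y => (key x).symm.trans (key y)

lemma leaf_tree {ι J : Type} [Finite ι] [Finite J] (T : SimpleGraph ι) (t : J → ι)
    (hT : T.IsTree) : (leafGraph T t).IsTree := by
  have hc : (leafGraph T t).Connected := by
    have := leaf_conn T t Set.univ
      ((SimpleGraph.induceUnivIso T).connected_iff.2 hT.connected) (fun _ _ => trivial)
    exact (SimpleGraph.induceUnivIso _).connected_iff.1 this
  rw [SimpleGraph.isTree_iff_connected_and_card]
  refine ⟨hc, ?_⟩
  have h2 := (SimpleGraph.isTree_iff_connected_and_card.1 hT).2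
  have he : (leafGraph T t).edgeSet = (Sym2.map Sum.inl '' T.edgeSet) ∪
      Set.range (fun j => s(Sum.inl (t j), Sum.inr j)) := by
    ext e
    induction e with | _ x y
    constructor
    · intro h
      rcases x with a | i <;> rcases y with b | j
      · exact Or.inl ⟨s(a, b), h, rfl⟩
      · have h : a = t j := h
        exact Or.inr ⟨j, by simp [h]⟩
      · have h : b = t i := h
        exact Or.inr ⟨i, by simp [h]⟩
      · exact h.elim
    · rintro (⟨e, he, h⟩ | ⟨j, h⟩)
      · rw [← h]
        induction e with | _ a b
        exact he
      · rw [← h]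
        show t j = t j
        rfl
  have hd : Disjoint (Sym2.map Sum.inl '' T.edgeSet)
      (Set.range (fun j => s((Sum.inl (t j) : ι ⊕ J), Sum.inr j))) := by
    rw [Set.disjoint_left]
    rintro _ ⟨e, _, rfl⟩ ⟨j, hj⟩
    induction e with | _ a b
    simp at hj
  rw [Nat.card_coe_set_eq] at h2 ⊢
  rw [he, Set.ncard_union_eq hd (Set.toFinite _) (Set.toFinite _),
    Set.ncard_image_of_injective _ (Sym2.map.injective Sum.inl_injective),
    ← Set.image_univ, Set.ncard_image_of_injective, Set.ncard_univ, Nat.card_sum]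
  · omega
  · intro i j hij
    have := by simpa using hij
    exact this.2

lemma exists_ext {n n' : ℕ} (hnn' : n < n')
    (E : Finset (Finset (Fin n))) (F : Finset (Fin n))
    (idx : Fin n' → Fin n)
    (E' : Finset (Finset (Fin n')))
    (hE' : E' = E.image (fun S => S.image (Fin.castLE hnn'.le)) ∪
        (Finset.univ.filter (fun j : Fin n' => n ≤ (j : ℕ))).image
          (fun j => ({Fin.castLE hnn'.le (idx j), j} : Finset (Fin n'))))
    (D : TreeDecomp E) (hD : D.FConnex F) :
    ∃ D' : TreeDecomp E', D'.FConnex (F.image (Fin.castLE hnn'.le)) ∧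
      ∀ h' : Finset (Fin n') → NNReal, EdgeDominated E' h' →
        D'.width h' ≤ D.width (fun X => h' (X.image (Fin.castLE hnn'.le))) ⊔ 1 := by
  have ht : ∀ v, ∃ a, v ∈ D.bag a := fun v => by
    obtain ⟨⟨a, ha⟩⟩ := (D.rip v).nonempty
    exact ⟨a, ha⟩
  choose τ hτ using ht
  have hinj : Function.Injective (Fin.castLE hnn'.le) := Fin.castLE_injective _
  have hlt : ∀ (a : Fin n), ¬ n ≤ (Fin.castLE hnn'.le a : ℕ) := fun a => by simp
  let J := {j : Fin n' // n ≤ (j : ℕ)}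
  let t : J → D.ι := fun j => τ (idx j.1)
  have := D.fin
  let bag' : D.ι ⊕ J → Finset (Fin n') := fun x => match x with
    | .inl a => (D.bag a).image (Fin.castLE hnn'.le)
    | .inr j => {Fin.castLE hnn'.le (idx j.1), j.1}
  have hb : ∀ a v, Fin.castLE hnn'.le v ∈ bag' (.inl a) ↔ v ∈ D.bag a := fun a v =>
    hinj.mem_finset_image
  have hb2 : ∀ (j : J) v, Fin.castLE hnn'.le v ∈ bag' (.inr j) ↔ v = idx j.1 := by
    intro j v
    have : Fin.castLE hnn'.le v ≠ j.1 := fun h => hlt v (h ▸ j.2)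
    simp [bag', this]
  have hb3 : ∀ (v : Fin n') (hv : n ≤ (v : ℕ)) a, v ∉ bag' (.inl a) := by
    intro v hv a h
    obtain ⟨w, _, rfl⟩ := Finset.mem_image.1 h
    exact hlt w hv
  have hb4 : ∀ (v : Fin n') (hv : n ≤ (v : ℕ)) (j : J), v ∈ bag' (.inr j) ↔ v = j.1 := by
    intro v hv j
    have : v ≠ Fin.castLE hnn'.le (idx j.1) := fun h => hlt _ (h ▸ hv)
    simp [bag', this]
  let D' : TreeDecomp E' :=
    { ι := D.ι ⊕ J
      fin := Fintype.ofFinite _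
      T := leafGraph D.T t
      isTree := leaf_tree _ _ D.isTree
      bag := bag'
      covers := by
        intro S hS
        rw [hE', Finset.mem_union] at hS
        rcases hS with hS | hS
        · obtain ⟨S₀, hS₀, rfl⟩ := Finset.mem_image.1 hS
          obtain ⟨a, ha⟩ := D.covers S₀ hS₀
          exact ⟨.inl a, Finset.image_subset_image ha⟩
        · obtain ⟨j, hj, rfl⟩ := Finset.mem_image.1 hS
          exact ⟨.inr ⟨j, (Finset.mem_filter.1 hj).2⟩, subset_rfl⟩
      rip := by
        intro v
        by_cases hv : n ≤ (v : ℕ)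
        · have : {x | v ∈ bag' x} = {Sum.inr ⟨v, hv⟩} := by
            ext x
            rcases x with a | j
            · simpa using hb3 v hv a
            · have := hb4 v hv j
              simp only [Set.mem_ofPred_eq, this, Set.mem_singleton_iff, Sum.inr.injEq]
              rw [Subtype.ext_iff]
              exact eq_comm
          rw [this]
          have : Nonempty ({Sum.inr ⟨v, hv⟩} : Set (D.ι ⊕ J)) := ⟨⟨_, rfl⟩⟩
          refine SimpleGraph.Connected.mk ?_
          rintro ⟨x, rfl⟩ ⟨y, rfl⟩
          exact SimpleGraph.Reachable.refl _
        · obtain ⟨w, rfl⟩ : ∃ w, v = Fin.castLE hnn'.le w := ⟨⟨v, by omega⟩, rfl⟩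
          apply leaf_conn
          · have hw : {a | (Sum.inl a : D.ι ⊕ J) ∈ {x | Fin.castLE hnn'.le w ∈ bag' x}} =
                {a | w ∈ D.bag a} := by
              ext a
              exact hb a w
            rw [hw]
            exact D.rip w
          · intro j hj
            have hj := (hb2 j w).1 hj
            refine (hb _ _).2 ?_
            rw [hj]
            exact hτ _ }
  refine ⟨D', ?_, ?_⟩
  · obtain ⟨V', hV, hF⟩ := hD
    refine ⟨Sum.inl '' V', ?_, ?_⟩
    · apply leaf_conn
      · have : {a | (Sum.inl a : D.ι ⊕ J) ∈ Sum.inl '' V'} = V' := by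
          ext a; simp
        rw [this]; exact hV
      · rintro j ⟨a, _, h⟩
        cases h
    · intro v
      constructor
      · intro h
        obtain ⟨w, hw, rfl⟩ := Finset.mem_image.1 h
        obtain ⟨a, ha, hwa⟩ := (hF w).1 hw
        exact ⟨.inl a, ⟨a, ha, rfl⟩, (hb a w).2 hwa⟩
      · rintro ⟨_, ⟨a, ha, rfl⟩, h⟩
        obtain ⟨w, hw, rfl⟩ := Finset.mem_image.1 h
        exact Finset.mem_image_of_mem _ ((hF w).2 ⟨a, ha, hw⟩)
  · intro h' hd
    refine iSup_le ?_
    rintro (a | j)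
    · exact le_sup_of_le_left
        (le_iSup (fun a => (h' ((D.bag a).image (Fin.castLE hnn'.le)) : ℝ≥0∞)) a)
    · refine le_sup_of_le_right ?_
      have : h' (bag' (.inr j)) ≤ 1 := by
        apply hd
        rw [hE', Finset.mem_union]
        exact Or.inr (Finset.mem_image.2 ⟨j.1, by simpa using j.2, rfl⟩)
      exact_mod_cast this

lemma exists_unit {n : ℕ} (E : Finset (Finset (Fin n))) (v : Fin n) :
    ∃ h : Finset (Fin n) → NNReal, (IsPolymatroid h ∧ EdgeDominated E h) ∧
      ∀ D : TreeDecomp E, 1 ≤ D.width h := by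
  refine ⟨fun X => if v ∈ X then 1 else 0, ⟨⟨by simp, ?_, ?_⟩, ?_⟩, ?_⟩
  · intro X Y hXY
    by_cases h : v ∈ X
    · simp [h, hXY h]
    · simp [h]
  · intro X Y
    by_cases h : v ∈ X <;> by_cases h' : v ∈ Y <;> simp [h, h']
  · intro S _
    dsimp only
    split_ifs <;> simp
  · intro D
    obtain ⟨⟨a, ha⟩⟩ := (D.rip v).nonempty
    have ha : v ∈ D.bag a := ha
    refine le_trans ?_ (le_iSup _ a)
    simp [ha]

lemma restrict {n n' : ℕ} (hnn' : n < n')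
    (E : Finset (Finset (Fin n))) 
    (idx : Fin n' → Fin n)
    (E' : Finset (Finset (Fin n')))
    (hE' : E' = E.image (fun S => S.image (Fin.castLE hnn'.le)) ∪
        (Finset.univ.filter (fun j : Fin n' => n ≤ (j : ℕ))).image
          (fun j => ({Fin.castLE hnn'.le (idx j), j} : Finset (Fin n'))))
    (h' : Finset (Fin n') → NNReal) (hp : IsPolymatroid h' ∧ EdgeDominated E' h') :
    IsPolymatroid (fun X : Finset (Fin n) => h' (X.image (Fin.castLE hnn'.le))) ∧
    EdgeDominated E (fun X => h' (X.image (Fin.castLE hnn'.le))) := by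
  obtain ⟨⟨h0, hm, hs⟩, hd⟩ := hp
  refine ⟨⟨by simpa using h0, fun X Y hXY => hm _ _ (Finset.image_subset_image hXY), ?_⟩, ?_⟩
  · intro X Y
    dsimp only
    rw [Finset.image_union, Finset.image_inter _ _ (Fin.castLE_injective _)]
    exact hs _ _
  · intro S hS
    apply hd
    rw [hE', Finset.mem_union]
    exact Or.inl (Finset.mem_image_of_mem _ hS)

end LeafExt

/-- Adding fresh vertices `j ∈ [n']∖[n]`, each attached by a single binary edge
`S_j = {i_j, j}` to an old vertex `i_j ∈ [n]`, does not increase the fractional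
hypertree width `fhtw_F` or the submodular width `subw_F` (assuming some vertex of
the original hypergraph belongs to a hyperedge). -/
theorem fhtwF_subwF_extension_le
    {n n' : ℕ} (hnn' : n < n')
    (E : Finset (Finset (Fin n))) (F : Finset (Fin n))
    (hne : ∃ S ∈ E, S.Nonempty)
    (idx : Fin n' → Fin n)
    (E' : Finset (Finset (Fin n')))
    (hE' : E' = E.image (fun S => S.image (Fin.castLE hnn'.le)) ∪
        (Finset.univ.filter (fun j : Fin n' => n ≤ (j : ℕ))).image
          (fun j => ({Fin.castLE hnn'.le (idx j), j} : Finset (Fin n')))) :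
    fhtwF E' (F.image (Fin.castLE hnn'.le)) ≤ fhtwF E F ∧
    subwF E' (F.image (Fin.castLE hnn'.le)) ≤ subwF E F := by
  obtain ⟨S, hS, v, hv⟩ := hne
  obtain ⟨h1, hh1, hw⟩ := LeafExt.exists_unit E v
  constructor
  · refine le_iInf fun D => ?_
    obtain ⟨D', hF, hle⟩ := LeafExt.exists_ext hnn' E F idx E' hE' D.1 D.2
    refine (iInf_le _ ⟨D', hF⟩).trans (iSup_le fun h' => (hle h'.1 h'.2.2).trans (sup_le ?_ ?_))
    · exact le_iSup (fun h : {h : Finset (Fin n) → NNReal // IsPolymatroid h ∧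
        EdgeDominated E h} => D.1.width h.1)
        ⟨_, LeafExt.restrict hnn' E idx E' hE' h'.1 h'.2⟩
    · exact (hw D.1).trans (le_iSup (fun h : {h : Finset (Fin n) → NNReal // IsPolymatroid h ∧
        EdgeDominated E h} => D.1.width h.1) ⟨h1, hh1⟩)
  · refine iSup_le fun h' => ?_
    have hg := LeafExt.restrict hnn' E idx E' hE' h'.1 h'.2
    have key : (⨅ D' : {D : TreeDecomp E' // D.FConnex (F.image (Fin.castLE hnn'.le))},
        D'.1.width h'.1) ≤ (⨅ D : {D : TreeDecomp E // D.FConnex F},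
          D.1.width (fun X => h'.1 (X.image (Fin.castLE hnn'.le)))) ⊔ 1 := by
      rw [iInf_sup_eq]
      refine le_iInf fun D => ?_
      obtain ⟨D', hF, hle⟩ := LeafExt.exists_ext hnn' E F idx E' hE' D.1 D.2
      exact (iInf_le _ ⟨D', hF⟩).trans (hle h'.1 h'.2.2)
    refine key.trans (sup_le ?_ ?_)
    · exact le_iSup (fun h : {h : Finset (Fin n) → NNReal // IsPolymatroid h ∧
        EdgeDominated E h} => ⨅ D : {D : TreeDecomp E // D.FConnex F}, D.1.width h.1) ⟨_, hg⟩
    · refine le_trans (le_iInf fun D : {D : TreeDecomp E // D.FConnex F} => hw D.1)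
        (le_iSup (fun h : {h : Finset (Fin n) → NNReal // IsPolymatroid h ∧
        EdgeDominated E h} => ⨅ D : {D : TreeDecomp E // D.FConnex F}, D.1.width h.1) ⟨h1, hh1⟩)
end
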